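/- arXiv:1611.08204 — 3 statements merged into one kernel-verified Lean document; each statement's English description precedes it below -/
import Mathlib

section
/- For all positive integers m, n and every t ∈ ZMod 5, the number of pairs (x,y) with 0 ≤ x < m, 0 ≤ y < n and 2x + y ≡ t (mod 5) is at least ⌊mn/5⌋ and at most ⌈mn/5⌉; moreover there exist t₀, t₁ ∈ ZMod 5 for which this count equals ⌊mn/5⌋ and ⌈mn/5⌉ respectively. -/
/-!
Any five consecutive values of `y` (with `x` fixed) give five consecutive values of `2x + y`, hence
meet each residue class mod 5 exactly once; the same holds for five consecutive values of `x` with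
`y` fixed, since 2 is invertible mod 5. So the count for `(m, n + 5)` exceeds that for `(m, n)` by
`m`, and the count for `(m + 5, n)` exceeds it by `n`, for every `t` simultaneously
(`boxCount_add_five_right`, `boxCount_add_five_left`). Writing `m = 5a + r` and `n = 5b + s`, both
the count and `mn/5` are shifted by the same integer `a n + r b` from their values at `(r, s)`,
which leaves the finitely many cases `r, s < 5` (`boxCount_small`).
-/

/-- The number `|V'(t)|` of points `(x, y)` of the `m × n` box with `2x + y ≡ t (mod 5)`. -/
def boxCount (m n : ℕ) (t : ZMod 5) : ℕ :=
  ((Finset.range m ×ˢ Finset.range n).filter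
    (fun p => (2 * (p.1 : ZMod 5) + (p.2 : ZMod 5) = t))).card

lemma boxCount_eq_sum (m n : ℕ) (t : ZMod 5) :
    boxCount m n t = ∑ x ∈ Finset.range m, ∑ y ∈ Finset.range n,
      if 2 * (x : ZMod 5) + (y : ZMod 5) = t then 1 else 0 := by
  rw [boxCount, Finset.card_filter, Finset.sum_product]

lemma boxCount_add_five_right (m n : ℕ) (t : ZMod 5) :
    boxCount m (n + 5) t = boxCount m n t + m := by
  have key : ∀ a c t : ZMod 5, (∑ i ∈ Finset.range 5,
      if 2 * a + (c + (i : ZMod 5)) = t then 1 else 0) = 1 := by decide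
  simp [boxCount_eq_sum, Finset.sum_range_add, Finset.sum_add_distrib, key, -Finset.sum_boole]

lemma boxCount_add_five_left (m n : ℕ) (t : ZMod 5) :
    boxCount (m + 5) n t = boxCount m n t + n := by
  have key : ∀ a c t : ZMod 5, (∑ i ∈ Finset.range 5,
      if 2 * (a + (i : ZMod 5)) + c = t then 1 else 0) = 1 := by decide
  rw [boxCount_eq_sum, boxCount_eq_sum, Finset.sum_range_add]
  congr 1
  rw [Finset.sum_comm]
  simp [key, -Finset.sum_boole]

lemma boxCount_reduce (a b r s : ℕ) (t : ZMod 5) :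
    boxCount (5 * a + r) (5 * b + s) t = boxCount r s t + (a * (5 * b + s) + r * b) := by
  induction a with
  | zero =>
    induction b with
    | zero => simp
    | succ b ih =>
      rw [show 5 * (b + 1) + s = 5 * b + s + 5 by ring, boxCount_add_five_right, ih]
      ring
  | succ a ih =>
    rw [show 5 * (a + 1) + r = 5 * a + r + 5 by ring, boxCount_add_five_left, ih]
    ring

lemma boxCount_small : ∀ r < 5, ∀ s < 5,
    (∀ t : ZMod 5, r * s / 5 ≤ boxCount r s t ∧ boxCount r s t ≤ (r * s + 4) / 5) ∧
    (∃ t₀ : ZMod 5, boxCount r s t₀ = r * s / 5) ∧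
    (∃ t₁ : ZMod 5, boxCount r s t₁ = (r * s + 4) / 5) := by
  decide +kernel

/-- The analogue of Chang's counting lemma for `V'(t)`: for all `m, n ≥ 1` and all
`t : ZMod 5`, the number of pairs `(x, y)` with `0 ≤ x < m`, `0 ≤ y < n` and
`2x + y ≡ t (mod 5)` lies between `⌊mn/5⌋` and `⌈mn/5⌉`, and both extremes are
attained for suitable `t₀, t₁`. -/
theorem V't_card_bounds_and_extremes (m n : ℕ) (hm : 0 < m) (hn : 0 < n) :
    (∀ t : ZMod 5,
      m * n / 5 ≤
        ((Finset.range m ×ˢ Finset.range n).filter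
          (fun p => (2 * (p.1 : ZMod 5) + (p.2 : ZMod 5) = t))).card ∧
      ((Finset.range m ×ˢ Finset.range n).filter
          (fun p => (2 * (p.1 : ZMod 5) + (p.2 : ZMod 5) = t))).card ≤
        (m * n + 4) / 5) ∧
    (∃ t₀ t₁ : ZMod 5,
      ((Finset.range m ×ˢ Finset.range n).filter
        (fun p => (2 * (p.1 : ZMod 5) + (p.2 : ZMod 5) = t₀))).card = m * n / 5 ∧
      ((Finset.range m ×ˢ Finset.range n).filter
        (fun p => (2 * (p.1 : ZMod 5) + (p.2 : ZMod 5) = t₁))).card = (m * n + 4) / 5) := by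
  change (∀ t, m * n / 5 ≤ boxCount m n t ∧ boxCount m n t ≤ (m * n + 4) / 5) ∧
    ∃ t₀ t₁, boxCount m n t₀ = m * n / 5 ∧ boxCount m n t₁ = (m * n + 4) / 5
  obtain ⟨a, r, hr, rfl⟩ : ∃ a r, r < 5 ∧ m = 5 * a + r := ⟨m / 5, m % 5, by omega, by omega⟩
  obtain ⟨b, s, hs, rfl⟩ : ∃ b s, s < 5 ∧ n = 5 * b + s := ⟨n / 5, n % 5, by omega, by omega⟩
  obtain ⟨hbd, ⟨t₀, h₀⟩, t₁, h₁⟩ := boxCount_small r hr s hs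
  have hmul : (5 * a + r) * (5 * b + s) = r * s + 5 * (a * (5 * b + s) + r * b) := by ring
  simp only [boxCount_reduce, hmul]
  refine ⟨fun t => ?_, t₀, t₁, ?_, ?_⟩
  · have := hbd t
    omega
  · omega
  · omega
end

section
/- (First upper bound, full boundary cover.) Let m, n ≥ 7 be integers with m ≡ 2 (mod 5) and n ≡ 2 (mod 5). There exists an eternal dominating family for P_m□P_n all of whose members have cardinality (m−2)(n−2)/5 + 2(m+n) − 4; consequently γ^∞(P_m□P_n) ≤ mn/5 + (8/5)(m+n) − 16/5. -/
/-!
A member of the family consists of the whole boundary together with the interior points of one of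
the ten perfect codes `x + 2 ε y ≡ t (mod 5)` of `ℤ²`, where `ε = ±1` and `t` is a residue. Each
such set dominates, because the code point dominating an interior vertex is either interior or on
the boundary, and it has the required cardinality, because every interior row has a multiple of
five vertices, one fifth of which lie in the code (`ncard_config`).

An attack is answered by changing `ε` to `-ε`, with the new residue chosen so that the attacked
vertex belongs to the new code (`exists_move`). The codes `x + 2 ε y ≡ t` and `x - 2 ε y ≡ t'`
share a single class `(p, q)` modulo 5, and in each `5 × 5` period based at `(p, q)` the four other
code points are carried into one another by rotating a small square of guards, each guard moving
by one step. This has no net displacement. If some of these guards cross between the interior and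
the boundary (for the vertical sides this happens exactly when `p ≡ 3`, for the horizontal ones
when `q ≡ 3`), then along each such side guards alternately enter and leave the boundary, at positions which differ by 3
and 2 in turn, equally many of each. An entering guard is paired with a leaving one and the guards
of the boundary segment between them slide by one step (`sideStep_slide`), so that the boundary
stays full. A single formula `step` describes these moves, and the moves for `ε` and `-ε` are
mutually inverse (`exists_good`), which gives the bijection.
-/

/-- Adjacency in the `m × n` grid `P_m □ P_n` on vertex set `Fin m × Fin n`. -/
def GridAdj (m n : ℕ) (v w : Fin m × Fin n) : Prop :=
  |(v.1 : ℤ) - (w.1 : ℤ)| + |(v.2 : ℤ) - (w.2 : ℤ)| = 1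

/-- A set of vertices dominates the `m × n` grid if every vertex has an element
of the set in its closed neighborhood. -/
def GridDominating (m n : ℕ) (D : Set (Fin m × Fin n)) : Prop :=
  ∀ v : Fin m × Fin n, ∃ u ∈ D, u = v ∨ GridAdj m n v u

/-- An eternal dominating family for `P_m □ P_n`: a nonempty collection of
dominating sets such that any attack on a vertex not in the current set can be
defended by a move (a bijection onto another member of the collection, moving
each guard within its closed neighborhood) that places a guard on the attacked
vertex. -/
def EternalDominatingFamily (m n : ℕ) (𝒮 : Set (Set (Fin m × Fin n))) : Prop :=
  𝒮.Nonempty ∧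
  (∀ S ∈ 𝒮, GridDominating m n S) ∧
  (∀ S ∈ 𝒮, ∀ a : Fin m × Fin n, a ∉ S →
    ∃ S' ∈ 𝒮, a ∈ S' ∧
      ∃ σ : Fin m × Fin n → Fin m × Fin n,
        Set.BijOn σ S S' ∧ ∀ v ∈ S, σ v = v ∨ GridAdj m n v (σ v))

/-! ### The move between two patterns of opposite chirality -/

/-- `x` is an interior coordinate of the path `{0, …, m - 1}`. -/
def Inside (m x : ℤ) : Prop := 1 ≤ x ∧ x ≤ m - 2
instance (m x : ℤ) : Decidable (Inside m x) := inferInstanceAs (Decidable (_ ∧ _))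

/-- The move of the guard at position `z` of a side, when guards enter the side at the positions
with `w * (z - o) ≡ 1` and leave it at those with `w * (z - o) ≡ 4` (mod 5), where `w = ±1`. The
components are the displacement along the side and the inward displacement. The test on
`(1 - o) % 5` decides whether each entering guard is paired with the leaving guard at distance 3 or
with the one at distance 2: the first if, reading upwards from position 1, the class `o + 1` occurs
before `o + 4`, the second otherwise. In this way no pair reaches beyond the side. -/
def sideStep (w o z : ℤ) : ℤ × ℤ :=
  if w * (z - o) % 5 = 4 then (0, 1)
  else if (1 - o) % 5 ≤ 1 then (if w * (z - o) % 5 = 0 then (0, 0) else (w, 0))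
  else if w * (z - o) % 5 ≤ 1 then (-w, 0) else (0, 0)

/-- The move of the guard at `v` from the code `x - p + 2 ε (y - q) ≡ 0` to the code
`x - p - 2 ε (y - q) ≡ 0` (mod 5), both completed by the full boundary of the `m × n` grid. For
an interior code point, the class of `y - q` determines that of `x - p`. -/
def step (m n p q ε : ℤ) (v : ℤ × ℤ) : ℤ × ℤ :=
  if Inside m v.1 ∧ Inside n v.2 then
    if (v.2 - q) % 5 = 1 then (v.1 - ε, v.2)
    else if (v.2 - q) % 5 = 2 then (v.1, v.2 + 1)
    else if (v.2 - q) % 5 = 3 then (v.1, v.2 - 1)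
    else if (v.2 - q) % 5 = 4 then (v.1 + ε, v.2)
    else v
  else if Inside n v.2 ∧ p % 5 = 3 then
    if v.1 = 0 then (v.1 + (sideStep ε q v.2).2, v.2 + (sideStep ε q v.2).1)
    else (v.1 - (sideStep (-ε) q v.2).2, v.2 + (sideStep (-ε) q v.2).1)
  else if Inside m v.1 ∧ q % 5 = 3 then
    if v.2 = 0 then (v.1 + (sideStep (-ε) p v.1).1, v.2 + (sideStep (-ε) p v.1).2)
    else (v.1 + (sideStep ε p v.1).1, v.2 - (sideStep ε p v.1).2)
  else v

/-- `v` is a vertex of the grid which carries a guard: it is on the boundary or in the code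
`x - p + 2 ε (y - q) ≡ 0` (mod 5). -/
def Occ (m n p q ε : ℤ) (v : ℤ × ℤ) : Prop :=
  (0 ≤ v.1 ∧ v.1 < m) ∧ (0 ≤ v.2 ∧ v.2 < n) ∧
    (Inside m v.1 → Inside n v.2 → (v.1 - p + 2 * ε * (v.2 - q)) % 5 = 0)

/-- `w` is in the closed neighborhood of `v` in `ℤ²`. -/
def Near (v w : ℤ × ℤ) : Prop :=
  (w.1 = v.1 ∧ -1 ≤ w.2 - v.2 ∧ w.2 - v.2 ≤ 1) ∨ (w.2 = v.2 ∧ -1 ≤ w.1 - v.1 ∧ w.1 - v.1 ≤ 1)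

theorem sideStep_in {w o z : ℤ} (h : w * (z - o) % 5 = 4) : sideStep w o z = (0, 1) := by
  simp [sideStep, h]

/-- A guard that stays on its side remains clear of the corners, and the slide with `-w` undoes
its move. The assumption on `n` makes entering and leaving guards equally numerous. -/
theorem sideStep_slide {n w o z : ℤ} (hn : n % 5 = 2) (hw : w = 1 ∨ w = -1)
    (hz : Inside n z) (h : w * (z - o) % 5 ≠ 4) :
    ∃ s, sideStep w o z = (s, 0) ∧ sideStep (-w) o (z + s) = (-s, 0) ∧ Inside n (z + s) ∧
      -1 ≤ s ∧ s ≤ 1 := by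
  unfold Inside at *
  have e : ∃ s, sideStep w o z = (s, 0) := by
    unfold sideStep; rw [if_neg h]; split_ifs <;> exact ⟨_, rfl⟩
  obtain ⟨s, hs⟩ := e
  refine ⟨s, hs, ?_⟩
  unfold sideStep at *
  rcases hw with rfl | rfl
  all_goals
    split_ifs at hs
    all_goals
      obtain rfl := (Prod.ext_iff.1 hs).1
      refine ⟨?_, by dsimp only; omega⟩
      dsimp only
    all_goals split_ifs <;> first | (exfalso; omega) | simp

section rules
variable {m n p q ε x y : ℤ}

theorem step_inside (hx : Inside m x) (hy : Inside n y) : step m n p q ε (x, y) =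
    if (y - q) % 5 = 1 then (x - ε, y)
    else if (y - q) % 5 = 2 then (x, y + 1)
    else if (y - q) % 5 = 3 then (x, y - 1)
    else if (y - q) % 5 = 4 then (x + ε, y)
    else (x, y) := by
  simp [step, hx, hy]

theorem step_left (hp : p % 5 = 3) (hy : Inside n y) : step m n p q ε (0, y) =
    ((sideStep ε q y).2, y + (sideStep ε q y).1) := by
  have h0 : ¬ Inside m 0 := fun h => by unfold Inside at h; omega
  simp [step, h0, hy, hp]

theorem step_right (hm : 7 ≤ m) (hp : p % 5 = 3) (hy : Inside n y) : step m n p q ε (m - 1, y) =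
    (m - 1 - (sideStep (-ε) q y).2, y + (sideStep (-ε) q y).1) := by
  have h0 : ¬ Inside m (m - 1) := fun h => by unfold Inside at h; omega
  have h1 : m - 1 ≠ 0 := by omega
  simp [step, h0, hy, hp, h1]

theorem step_bottom (hq : q % 5 = 3) (hx : Inside m x) : step m n p q ε (x, 0) =
    (x + (sideStep (-ε) p x).1, (sideStep (-ε) p x).2) := by
  have h0 : ¬ Inside n 0 := fun h => by unfold Inside at h; omega
  simp [step, h0, hx, hq]

theorem step_top (hn : 7 ≤ n) (hq : q % 5 = 3) (hx : Inside m x) : step m n p q ε (x, n - 1) =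
    (x + (sideStep ε p x).1, n - 1 - (sideStep ε p x).2) := by
  have h0 : ¬ Inside n (n - 1) := fun h => by unfold Inside at h; omega
  have h1 : n - 1 ≠ 0 := by omega
  simp [step, h0, hx, hq, h1]

theorem step_stay (h : ¬ (Inside m x ∧ Inside n y)) (h1 : ¬ (Inside n y ∧ p % 5 = 3))
    (h2 : ¬ (Inside m x ∧ q % 5 = 3)) : step m n p q ε (x, y) = (x, y) := by
  simp only [step, h, h1, h2, if_false]

/-- `w` is a legitimate target of the move of the guard at `v`, and the move with `-ε` takes it
back to `v`. -/
def Good (m n p q ε : ℤ) (v w : ℤ × ℤ) : Prop :=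
  step m n p q ε v = w ∧ step m n p q (-ε) w = v ∧ Occ m n p q (-ε) w ∧ Near v w

/-- An interior guard crosses into a vertical side only if `p ≡ 3` and into a horizontal one only
if `q ≡ 3`; the class in which it arrives is the one in which `step` with `-ε` leads inwards. -/
theorem good_inside (hm : m % 5 = 2) (hn : n % 5 = 2) (hm7 : 7 ≤ m) (hn7 : 7 ≤ n)
    (hε : ε = 1 ∨ ε = -1) (hx : Inside m x) (hy : Inside n y)
    (h : (x - p + 2 * ε * (y - q)) % 5 = 0) : ∃ w, Good m n p q ε (x, y) w := by
  refine ⟨_, step_inside hx hy, ?_⟩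
  have hc : (y - q) % 5 = 0 ∨ (y - q) % 5 = 1 ∨ (y - q) % 5 = 2 ∨ (y - q) % 5 = 3 ∨
    (y - q) % 5 = 4 := by omega
  rcases hc with hc | hc | hc | hc | hc <;> simp only [hc] <;> norm_num
  · refine ⟨by simp [step_inside hx hy, hc], ?_, ?_⟩
    · unfold Occ Inside at *; dsimp only
      rcases hε with rfl | rfl <;> omega
    · simp [Near]
  · refine ⟨?_, ?_, ?_⟩
    · by_cases hx' : Inside m (x - ε)
      · simp [step_inside hx' hy, hc]
      · have hp : p % 5 = 3 := by unfold Inside at *; rcases hε with rfl | rfl <;> omega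
        rcases hε with rfl | rfl
        · obtain rfl : x = 1 := by unfold Inside at *; omega
          rw [show (1 : ℤ) - 1 = 0 by rfl, step_left hp hy, sideStep_in (by omega)]
          simp
        · obtain rfl : x = m - 2 := by unfold Inside at *; omega
          rw [show m - 2 - -1 = m - 1 by ring, step_right hm7 hp hy, sideStep_in (by omega)]
          simp; ring
    · unfold Occ Inside at *; dsimp only
      rcases hε with rfl | rfl <;> omega
    · unfold Near; rcases hε with rfl | rfl <;> simp
  · refine ⟨?_, ?_, ?_⟩
    · by_cases hy' : Inside n (y + 1)
      · have hc' : (y + 1 - q) % 5 = 3 := by omega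
        simp [step_inside hx hy', hc']
      · have hq : q % 5 = 3 := by unfold Inside at *; omega
        obtain rfl : y = n - 2 := by unfold Inside at *; omega
        rw [show n - 2 + 1 = n - 1 by ring, step_top hn7 hq hx,
          sideStep_in (by rcases hε with rfl | rfl <;> omega)]
        simp; ring
    · unfold Occ Inside at *; dsimp only
      rcases hε with rfl | rfl <;> omega
    · simp [Near]
  · refine ⟨?_, ?_, ?_⟩
    · by_cases hy' : Inside n (y - 1)
      · have hc' : (y - 1 - q) % 5 = 2 := by omega
        simp [step_inside hx hy', hc']
      · have hq : q % 5 = 3 := by unfold Inside at *; omega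
        obtain rfl : y = 1 := by unfold Inside at *; omega
        rw [show (1 : ℤ) - 1 = 0 by rfl, step_bottom hq hx,
          sideStep_in (by rcases hε with rfl | rfl <;> omega)]
        simp
    · unfold Occ Inside at *; dsimp only
      rcases hε with rfl | rfl <;> omega
    · simp [Near]
  · refine ⟨?_, ?_, ?_⟩
    · by_cases hx' : Inside m (x + ε)
      · simp [step_inside hx' hy, hc]
      · have hp : p % 5 = 3 := by unfold Inside at *; rcases hε with rfl | rfl <;> omega
        rcases hε with rfl | rfl
        · obtain rfl : x = m - 2 := by unfold Inside at *; omega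
          rw [show m - 2 + 1 = m - 1 by ring, step_right hm7 hp hy, sideStep_in (by omega)]
          simp; ring
        · obtain rfl : x = 1 := by unfold Inside at *; omega
          rw [show (1 : ℤ) + -1 = 0 by rfl, step_left hp hy, sideStep_in (by omega)]
          simp
    · unfold Occ Inside at *; dsimp only
      rcases hε with rfl | rfl <;> omega
    · unfold Near; rcases hε with rfl | rfl <;> simp

theorem good_left (hm : m % 5 = 2) (hn : n % 5 = 2) (hm7 : 7 ≤ m)
    (hε : ε = 1 ∨ ε = -1) (hp : p % 5 = 3) (hy : Inside n y) :
    ∃ w, Good m n p q ε (0, y) w := by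
  by_cases hc : ε * (y - q) % 5 = 4
  · refine ⟨_, step_left hp hy, ?_⟩
    have h1 : Inside m 1 := by unfold Inside; omega
    simp only [sideStep_in hc, add_zero]
    refine ⟨?_, ?_, by simp [Near]⟩
    · rw [step_inside h1 hy]
      rcases hε with rfl | rfl
      · have hc' : (y - q) % 5 = 4 := by omega
        simp [hc']
      · have hc' : (y - q) % 5 = 1 := by omega
        simp [hc']
    · unfold Occ Inside at *; dsimp only
      rcases hε with rfl | rfl <;> omega
  · obtain ⟨s, h1, h2, h3, h4⟩ := sideStep_slide hn hε hy hc
    refine ⟨_, step_left hp hy, ?_⟩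
    simp only [h1]
    refine ⟨by simp [step_left hp h3, h2], ?_, ?_⟩
    · unfold Occ Inside at *; dsimp only; omega
    · unfold Near; dsimp only; omega

theorem good_right (hm : m % 5 = 2) (hn : n % 5 = 2) (hm7 : 7 ≤ m)
    (hε : ε = 1 ∨ ε = -1) (hp : p % 5 = 3) (hy : Inside n y) :
    ∃ w, Good m n p q ε (m - 1, y) w := by
  by_cases hc : -ε * (y - q) % 5 = 4
  · refine ⟨_, step_right hm7 hp hy, ?_⟩
    have h1 : Inside m (m - 1 - 1) := by unfold Inside; omega
    simp only [sideStep_in hc, add_zero]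
    refine ⟨?_, ?_, by simp [Near]⟩
    · rw [step_inside h1 hy]
      rcases hε with rfl | rfl
      · have hc' : (y - q) % 5 = 1 := by omega
        simp [hc']
      · have hc' : (y - q) % 5 = 4 := by omega
        simp [hc']
    · unfold Occ Inside at *; dsimp only
      rcases hε with rfl | rfl <;> omega
  · obtain ⟨s, h1, h2, h3, h4⟩ := sideStep_slide hn (by omega) hy hc
    rw [neg_neg] at h2
    refine ⟨_, step_right hm7 hp hy, ?_⟩
    simp only [h1, sub_zero]
    refine ⟨by simp [step_right hm7 hp h3, h2], ?_, ?_⟩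
    · unfold Occ Inside at *; dsimp only; omega
    · unfold Near; dsimp only; omega

theorem good_bottom (hm : m % 5 = 2) (hn : n % 5 = 2) (hn7 : 7 ≤ n)
    (hε : ε = 1 ∨ ε = -1) (hq : q % 5 = 3) (hx : Inside m x) :
    ∃ w, Good m n p q ε (x, 0) w := by
  by_cases hc : -ε * (x - p) % 5 = 4
  · refine ⟨_, step_bottom hq hx, ?_⟩
    have h1 : Inside n 1 := by unfold Inside; omega
    simp only [sideStep_in hc, add_zero]
    have hc' : (1 - q) % 5 = 3 := by omega
    refine ⟨by simp [step_inside hx h1, hc'], ?_, by simp [Near]⟩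
    unfold Occ Inside at *; dsimp only
    rcases hε with rfl | rfl <;> omega
  · obtain ⟨s, h1, h2, h3, h4⟩ := sideStep_slide hm (by omega) hx hc
    rw [neg_neg] at h2
    refine ⟨_, step_bottom hq hx, ?_⟩
    simp only [h1]
    refine ⟨by simp [step_bottom hq h3, h2], ?_, ?_⟩
    · unfold Occ Inside at *; dsimp only; omega
    · unfold Near; dsimp only; omega

theorem good_top (hm : m % 5 = 2) (hn : n % 5 = 2) (hn7 : 7 ≤ n)
    (hε : ε = 1 ∨ ε = -1) (hq : q % 5 = 3) (hx : Inside m x) :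
    ∃ w, Good m n p q ε (x, n - 1) w := by
  by_cases hc : ε * (x - p) % 5 = 4
  · refine ⟨_, step_top hn7 hq hx, ?_⟩
    have h1 : Inside n (n - 1 - 1) := by unfold Inside; omega
    simp only [sideStep_in hc, add_zero]
    have hc' : (n - 1 - 1 - q) % 5 = 2 := by omega
    refine ⟨by simp [step_inside hx h1, hc'], ?_, by simp [Near]⟩
    unfold Occ Inside at *; dsimp only
    rcases hε with rfl | rfl <;> omega
  · obtain ⟨s, h1, h2, h3, h4⟩ := sideStep_slide hm hε hx hc
    refine ⟨_, step_top hn7 hq hx, ?_⟩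
    simp only [h1, sub_zero]
    refine ⟨by simp [step_top hn7 hq h3, h2], ?_, ?_⟩
    · unfold Occ Inside at *; dsimp only; omega
    · unfold Near; dsimp only; omega

theorem exists_good (hm : m % 5 = 2) (hn : n % 5 = 2) (hm7 : 7 ≤ m) (hn7 : 7 ≤ n)
    (hε : ε = 1 ∨ ε = -1) {v : ℤ × ℤ} (h : Occ m n p q ε v) : ∃ w, Good m n p q ε v w := by
  obtain ⟨x, y⟩ := v
  obtain ⟨hx, hy, h⟩ := h
  dsimp only at hx hy h
  by_cases hxi : Inside m x <;> by_cases hyi : Inside n y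
  · exact good_inside hm hn hm7 hn7 hε hxi hyi (h hxi hyi)
  · by_cases hq : q % 5 = 3
    · obtain rfl | rfl : y = 0 ∨ y = n - 1 := by unfold Inside at *; omega
      · exact good_bottom hm hn hn7 hε hq hxi
      · exact good_top hm hn hn7 hε hq hxi
    · have hs : ∀ ε, step m n p q ε (x, y) = (x, y) := fun ε =>
        step_stay (by tauto) (by tauto) (by tauto)
      exact ⟨_, hs _, hs _, ⟨hx, hy, fun _ h => absurd h hyi⟩, by simp [Near]⟩
  · by_cases hp : p % 5 = 3
    · obtain rfl | rfl : x = 0 ∨ x = m - 1 := by unfold Inside at *; omega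
      · exact good_left hm hn hm7 hε hp hyi
      · exact good_right hm hn hm7 hε hp hyi
    · have hs : ∀ ε, step m n p q ε (x, y) = (x, y) := fun ε =>
        step_stay (by tauto) (by tauto) (by tauto)
      exact ⟨_, hs _, hs _, ⟨hx, hy, fun h => absurd h hxi⟩, by simp [Near]⟩
  · have hs : ∀ ε, step m n p q ε (x, y) = (x, y) := fun ε =>
      step_stay (by tauto) (by tauto) (by tauto)
    exact ⟨_, hs _, hs _, ⟨hx, hy, fun h => absurd h hxi⟩, by simp [Near]⟩
end rules

/-! ### Configurations in the grid -/

/-- The inclusion of the grid in `ℤ²`. -/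
def emb {m n : ℕ} (v : Fin m × Fin n) : ℤ × ℤ := ((v.1 : ℕ), (v.2 : ℕ))

theorem emb_injective {m n : ℕ} : Function.Injective (emb : Fin m × Fin n → ℤ × ℤ) := by
  rintro ⟨x, y⟩ ⟨x', y'⟩ h
  simp only [emb, Prod.mk.injEq, Nat.cast_inj] at h
  exact Prod.ext (Fin.ext h.1) (Fin.ext h.2)

theorem exists_emb {m n : ℕ} {w : ℤ × ℤ} (h1 : 0 ≤ w.1 ∧ w.1 < m) (h2 : 0 ≤ w.2 ∧ w.2 < n) :
    ∃ v : Fin m × Fin n, emb v = w :=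
  ⟨(⟨w.1.toNat, by omega⟩, ⟨w.2.toNat, by omega⟩), by
    apply Prod.ext <;> simp [emb, h1.1, h2.1]⟩

theorem adj_of_near {m n : ℕ} {v w : Fin m × Fin n} (h : Near (emb v) (emb w)) :
    w = v ∨ GridAdj m n v w := by
  by_cases hvw : w = v
  · exact Or.inl hvw
  right
  have h0 : emb w ≠ emb v := fun h => hvw (emb_injective h)
  simp only [Near, emb, ne_eq, Prod.mk.injEq] at h h0
  unfold GridAdj
  generalize (((v.1 : ℕ)) : ℤ) = a at *
  generalize (((v.2 : ℕ)) : ℤ) = b at *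
  generalize (((w.1 : ℕ)) : ℤ) = c at *
  generalize (((w.2 : ℕ)) : ℤ) = d at *
  rcases abs_cases (a - c) with ⟨e, _⟩ | ⟨e, _⟩ <;> rcases abs_cases (b - d) with ⟨f, _⟩ | ⟨f, _⟩ <;>
    rw [e, f] <;> omega

/-- The configuration with guards on the whole boundary and at the interior points of the code
`x + 2 ε y ≡ t` (mod 5). -/
def config (m n : ℕ) (ε t : ℤ) : Set (Fin m × Fin n) :=
  {v | Inside m (emb v).1 → Inside n (emb v).2 → ((emb v).1 + 2 * ε * (emb v).2 - t) % 5 = 0}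

/-- Guards counted from a base point `(p, q)` form the configuration of residue
`t ≡ p + 2 ε q`. -/
theorem occ_emb {m n : ℕ} {p q ε t : ℤ} (h : (p + 2 * ε * q - t) % 5 = 0) (v : Fin m × Fin n) :
    Occ m n p q ε (emb v) ↔ v ∈ config m n ε t := by
  have h1 : 0 ≤ (emb v).1 ∧ (emb v).1 < m := by simp [emb]
  have h2 : 0 ≤ (emb v).2 ∧ (emb v).2 < n := by simp [emb]
  have e : (emb v).1 - p + 2 * ε * ((emb v).2 - q) =
    ((emb v).1 + 2 * ε * (emb v).2 - t) - (p + 2 * ε * q - t) := by ring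
  have e' : ((emb v).1 - p + 2 * ε * ((emb v).2 - q)) % 5 = 0 ↔
    ((emb v).1 + 2 * ε * (emb v).2 - t) % 5 = 0 := by rw [e]; omega
  simp only [Occ, h1, h2, config, Set.mem_ofPred_eq, e', true_and, and_self]

theorem config_dominating {m n : ℕ} {ε : ℤ} (hε : ε = 1 ∨ ε = -1) (t : ℤ) :
    GridDominating m n (config m n ε t) := by
  intro v
  by_cases hv : v ∈ config m n ε t
  · exact ⟨v, hv, Or.inl rfl⟩
  have hv' := hv
  simp only [config, Set.mem_ofPred_eq, not_forall] at hv'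
  obtain ⟨hx, hy, hr⟩ := hv'
  have key : ∃ d : ℤ × ℤ, Near (emb v) (emb v + d) ∧
      (((emb v).1 + d.1) + 2 * ε * ((emb v).2 + d.2) - t) % 5 = 0 := by
    generalize emb v = w at *
    unfold Near
    have hr' : (w.1 + 2 * ε * w.2 - t) % 5 = 1 ∨ (w.1 + 2 * ε * w.2 - t) % 5 = 2 ∨
      (w.1 + 2 * ε * w.2 - t) % 5 = 3 ∨ (w.1 + 2 * ε * w.2 - t) % 5 = 4 := by omega
    -- The five points of a closed neighborhood have distinct residues, so one is in the code.
    rcases hr' with h | h | h | h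
    · exact ⟨(-1, 0), by simp, by dsimp only; rw [add_zero]; omega⟩
    · refine ⟨(0, -ε), ?_, ?_⟩ <;> rcases hε with rfl | rfl <;> dsimp <;> omega
    · refine ⟨(0, ε), ?_, ?_⟩ <;> rcases hε with rfl | rfl <;> dsimp <;> omega
    · exact ⟨(1, 0), by simp, by dsimp only; rw [add_zero]; omega⟩
  obtain ⟨d, hd, hd'⟩ := key
  obtain ⟨u, hu⟩ := exists_emb (m := m) (n := n) (w := emb v + d)
    (by unfold Inside Near at *; simp only [Prod.fst_add, Prod.snd_add] at *; omega)
    (by unfold Inside Near at *; simp only [Prod.fst_add, Prod.snd_add] at *; omega)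
  refine ⟨u, fun _ _ => ?_, adj_of_near (hu ▸ hd)⟩
  rw [hu]; exact hd'

/-- Any two configurations of opposite chirality are related by a legal move of all guards. -/
theorem exists_move {m n : ℕ} (hm : 7 ≤ m) (hn : 7 ≤ n) (hm5 : m % 5 = 2) (hn5 : n % 5 = 2)
    {ε : ℤ} (hε : ε = 1 ∨ ε = -1) (t t' : ℤ) :
    ∃ σ : Fin m × Fin n → Fin m × Fin n, Set.BijOn σ (config m n ε t) (config m n (-ε) t') ∧
      ∀ v ∈ config m n ε t, σ v = v ∨ GridAdj m n v (σ v) := by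
  obtain ⟨p, q, h1, h2⟩ : ∃ p q : ℤ, (p + 2 * ε * q - t) % 5 = 0 ∧
      (p + 2 * -ε * q - t') % 5 = 0 := by
    -- The base point common to both codes: `2 p ≡ t + t'` and `4 ε q ≡ t - t'`.
    refine ⟨3 * (t + t'), ε * (t' - t), ?_⟩
    rcases hε with rfl | rfl <;> constructor <;> omega
  have H : ∀ ε : ℤ, (ε = 1 ∨ ε = -1) → ∀ v : Fin m × Fin n, Occ m n p q ε (emb v) →
      ∃ w : Fin m × Fin n, Good m n p q ε (emb v) (emb w) := by
    intro ε hε v hv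
    obtain ⟨w, hw⟩ := exists_good (by omega) (by omega) (by omega) (by omega) hε hv
    obtain ⟨u, rfl⟩ := exists_emb hw.2.2.1.1 hw.2.2.1.2.1
    exact ⟨u, hw⟩
  have H1 : ∀ v : Fin m × Fin n, ∃ w : Fin m × Fin n, v ∈ config m n ε t →
      Good m n p q ε (emb v) (emb w) := by
    intro v
    by_cases hv : v ∈ config m n ε t
    · obtain ⟨w, hw⟩ := H ε hε v ((occ_emb h1 v).2 hv)
      exact ⟨w, fun _ => hw⟩
    · exact ⟨v, fun h => absurd h hv⟩
  choose σ hσ using H1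
  refine ⟨σ, ⟨fun v hv => (occ_emb h2 _).1 (hσ v hv).2.2.1, ?_, ?_⟩,
    fun v hv => adj_of_near (hσ v hv).2.2.2⟩
  · intro v hv w hw hvw
    apply emb_injective
    rw [← (hσ v hv).2.1, hvw, (hσ w hw).2.1]
  · intro w hw
    obtain ⟨v, hv⟩ := H (-ε) (by omega) w ((occ_emb h2 w).2 hw)
    have hv' := hv.2.2.1
    have hv'' := hv.2.1
    rw [neg_neg] at hv' hv''
    have hvS := (occ_emb h1 v).1 hv'
    exact ⟨v, hvS, emb_injective ((hσ v hvS).1.symm.trans hv'')⟩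

/-! ### Cardinality -/

theorem sum_residue (a : ℕ) (c : ℤ) :
    ∑ x ∈ Finset.range (5 * a), (if (((x + 1 : ℕ) : ℤ) + c) % 5 = 0 then 1 else 0) = a := by
  induction a with
  | zero => simp
  | succ a ih =>
    rw [show 5 * (a + 1) = 5 * a + 1 + 1 + 1 + 1 + 1 by ring]
    simp only [Finset.sum_range_succ, ih]
    push_cast
    split_ifs <;> omega

theorem sum_peel (a : ℕ) (f : ℕ → ℕ) : ∑ x ∈ Finset.range (5 * a + 2), f x =
    f 0 + ∑ x ∈ Finset.range (5 * a), f (x + 1) + f (5 * a + 1) := by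
  rw [Finset.sum_range_succ, Finset.sum_range_succ']; ring

theorem ncard_config (a b : ℕ) (ε t : ℤ) :
    (config (5 * a + 2) (5 * b + 2) ε t).ncard = 5 * a * b + 10 * a + 10 * b + 4 := by
  classical
  -- `f` is the indicator function; a boundary row has sum `5 * a + 2`, an interior row `a + 2`.
  let f : ℕ → ℕ → ℕ := fun x y => if (Inside (5 * a + 2 : ℕ) x → Inside (5 * b + 2 : ℕ) y →
    ((x : ℤ) + 2 * ε * y - t) % 5 = 0) then 1 else 0
  have h1 : (config (5 * a + 2) (5 * b + 2) ε t).ncard =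
      ∑ y ∈ Finset.range (5 * b + 2), ∑ x ∈ Finset.range (5 * a + 2), f x y := by
    rw [Set.ncard_eq_toFinset_card', Finset.sum_range]
    simp only [Finset.sum_range]
    rw [← Fintype.sum_prod_type_right', Finset.sum_boole, Nat.cast_id]
    congr 1
    ext v
    rw [Set.mem_toFinset]
    simp [config, emb]
  have h2 : ∀ y, ∑ x ∈ Finset.range (5 * a + 2), f x y =
      if Inside (5 * b + 2 : ℕ) y then a + 2 else 5 * a + 2 := by
    intro y
    rw [sum_peel]
    have e0 : f 0 y = 1 := by simp [f, Inside]
    have e1 : f (5 * a + 1) y = 1 := by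
      simp only [f]; rw [if_pos]; intro h; unfold Inside at h; push_cast at h; omega
    rw [e0, e1]
    split_ifs with hy
    · have : ∀ x ∈ Finset.range (5 * a), f (x + 1) y =
          if (((x + 1 : ℕ) : ℤ) + (2 * ε * y - t)) % 5 = 0 then 1 else 0 := by
        intro x hx
        have hx' : Inside (5 * a + 2 : ℕ) (x + 1 : ℕ) := by
          rw [Finset.mem_range] at hx; unfold Inside; push_cast; omega
        simp only [f, hx', hy, true_imp_iff, add_sub_assoc]
      rw [Finset.sum_congr rfl this, sum_residue]; ring
    · have : ∀ x ∈ Finset.range (5 * a), f (x + 1) y = 1 := fun x _ => by simp only [f, hy]; simp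
      rw [Finset.sum_congr rfl this]
      simp; ring
  rw [h1, Finset.sum_congr rfl (fun y _ => h2 y), sum_peel]
  have e : ∀ y ∈ Finset.range (5 * b), (if Inside (5 * b + 2 : ℕ) (y + 1 : ℕ) then a + 2
      else 5 * a + 2) = a + 2 := by
    intro y hy
    rw [if_pos]
    rw [Finset.mem_range] at hy; unfold Inside; push_cast; omega
  have i0 : ¬ Inside (5 * b + 2 : ℕ) (0 : ℕ) := by unfold Inside; omega
  have i1 : ¬ Inside (5 * b + 2 : ℕ) (5 * b + 1 : ℕ) := by unfold Inside; omega
  rw [Finset.sum_congr rfl e, if_neg i0, if_neg i1, Finset.sum_const, Finset.card_range,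
    smul_eq_mul]
  ring

/-! ### The theorem -/

/-- First upper bound (full boundary cover): for `m, n ≥ 7` with
`m ≡ n ≡ 2 (mod 5)` there is an eternal dominating family for `P_m □ P_n` all of
whose members have cardinality `(m-2)(n-2)/5 + 2(m+n) - 4`; this quantity equals
`mn/5 + (8/5)(m+n) - 16/5`, so `γ^∞(P_m □ P_n) ≤ mn/5 + (8/5)(m+n) - 16/5`. -/
theorem eternal_domination_full_boundary (m n : ℕ) (hm : 7 ≤ m) (hn : 7 ≤ n)
    (hm5 : m % 5 = 2) (hn5 : n % 5 = 2) :
    (∃ 𝒮 : Set (Set (Fin m × Fin n)),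
      EternalDominatingFamily m n 𝒮 ∧
      ∀ S ∈ 𝒮, S.ncard = (m - 2) * (n - 2) / 5 + 2 * (m + n) - 4) ∧
    5 * ((m - 2) * (n - 2) / 5 + 2 * (m + n) - 4) = m * n + 8 * (m + n) - 16 := by
  obtain ⟨a, rfl⟩ : ∃ a, m = 5 * a + 2 := ⟨m / 5, by omega⟩
  obtain ⟨b, rfl⟩ : ∃ b, n = 5 * b + 2 := ⟨n / 5, by omega⟩
  have hcard : (5 * a + 2 - 2) * (5 * b + 2 - 2) / 5 + 2 * (5 * a + 2 + (5 * b + 2)) - 4 =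
      5 * a * b + 10 * a + 10 * b + 4 := by
    have : (5 * a + 2 - 2) * (5 * b + 2 - 2) = 5 * (5 * a * b) := by
      simp only [Nat.add_sub_cancel]; ring
    rw [this, Nat.mul_div_cancel_left _ (by norm_num)]
    omega
  rw [hcard]
  constructor
  · refine ⟨{S | ∃ ε t : ℤ, (ε = 1 ∨ ε = -1) ∧ S = config _ _ ε t},
      ⟨⟨_, 1, 0, Or.inl rfl, rfl⟩, ?_, ?_⟩, ?_⟩
    · rintro S ⟨ε, t, hε, rfl⟩
      exact config_dominating hε t
    · rintro S ⟨ε, t, hε, rfl⟩ v -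
      refine ⟨_, ⟨-ε, (emb v).1 + 2 * -ε * (emb v).2, by omega, rfl⟩, ?_,
        exists_move hm hn hm5 hn5 hε t _⟩
      intro _ _
      simp
    · rintro S ⟨ε, t, -, rfl⟩
      exact ncard_config a b ε t
  · have : (5 * a + 2) * (5 * b + 2) = 25 * (a * b) + 10 * a + 10 * b + 4 := by ring
    rw [this, show 5 * a * b = 5 * (a * b) by ring]
    omega
end

section
/- (Main theorem.) There exists a constant C ∈ ℕ such that for all integers m, n ≥ 16 there exists an eternal dominating family for P_m□P_n all of whose members have cardinality at most γ(m,n) + C·(m+n), where γ(m,n) denotes the minimum cardinality of a dominating set of P_m□P_n; consequently γ^∞(P_m□P_n) ≤ γ(m,n) + O(m+n). -/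
/-- The domination number `γ(m, n)` of the `m × n` grid: the minimum cardinality
of a dominating set. -/
noncomputable def gridGamma (m n : ℕ) : ℕ :=
  sInf {k : ℕ | ∃ D : Set (Fin m × Fin n), GridDominating m n D ∧ D.ncard = k}

namespace EternalGrid

/-! ### Perfect codes of the square lattice -/

/-- The perfect code `D_t = {x + 2y ≡ t mod 5}` of the square lattice. -/
def InD (t : ℤ) (v : ℤ × ℤ) : Prop := (v.1 + 2 * v.2 - t) % 5 = 0

/-- The mirror image `D'_s = {x - 2y ≡ s mod 5}` of the codes `D_t`. -/
def InD' (s : ℤ) (v : ℤ × ℤ) : Prop := (v.1 - 2 * v.2 - s) % 5 = 0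

/-- The unique element of `D_t` in the closed neighborhood of a lattice point. -/
def toD (t : ℤ) (v : ℤ × ℤ) : ℤ × ℤ :=
  if (t - v.1 - 2 * v.2) % 5 = 1 then (v.1 + 1, v.2)
  else if (t - v.1 - 2 * v.2) % 5 = 4 then (v.1 - 1, v.2)
  else if (t - v.1 - 2 * v.2) % 5 = 2 then (v.1, v.2 + 1)
  else if (t - v.1 - 2 * v.2) % 5 = 3 then (v.1, v.2 - 1)
  else v

/-- The unique element of `D'_s` in the closed neighborhood of a lattice point. -/
def toD' (s : ℤ) (v : ℤ × ℤ) : ℤ × ℤ :=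
  if (s - v.1 + 2 * v.2) % 5 = 1 then (v.1 + 1, v.2)
  else if (s - v.1 + 2 * v.2) % 5 = 4 then (v.1 - 1, v.2)
  else if (s - v.1 + 2 * v.2) % 5 = 3 then (v.1, v.2 + 1)
  else if (s - v.1 + 2 * v.2) % 5 = 2 then (v.1, v.2 - 1)
  else v

/-- Distance at most one in the square lattice. -/
def Near (v w : ℤ × ℤ) : Prop := |v.1 - w.1| + |v.2 - w.2| ≤ 1

/-- The `5a × 5b` interior rectangle. -/
def Inner (a b : ℤ) (v : ℤ × ℤ) : Prop :=
  0 ≤ v.1 ∧ v.1 < 5 * a ∧ 0 ≤ v.2 ∧ v.2 < 5 * b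

lemma near_iff (v w : ℤ × ℤ) : Near v w ↔
    (v = w ∨ (w.1 = v.1 + 1 ∧ w.2 = v.2) ∨ (w.1 = v.1 - 1 ∧ w.2 = v.2) ∨
      (w.1 = v.1 ∧ w.2 = v.2 + 1) ∨ (w.1 = v.1 ∧ w.2 = v.2 - 1)) := by
  unfold Near
  rw [Prod.ext_iff]
  constructor
  · intro h
    rcases abs_cases (v.1 - w.1) with h1 | h1 <;> rcases abs_cases (v.2 - w.2) with h2 | h2 <;> omega
  · intro h
    rcases abs_cases (v.1 - w.1) with h1 | h1 <;> rcases abs_cases (v.2 - w.2) with h2 | h2 <;> omega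

lemma toD_spec (t : ℤ) (v : ℤ × ℤ) : InD t (toD t v) ∧ Near v (toD t v) := by
  rw [near_iff, Prod.ext_iff]
  unfold InD toD
  split_ifs <;> simp <;> omega

lemma toD'_spec (s : ℤ) (v : ℤ × ℤ) : InD' s (toD' s v) ∧ Near v (toD' s v) := by
  rw [near_iff, Prod.ext_iff]
  unfold InD' toD'
  split_ifs <;> simp <;> omega

lemma Near.symm {v w : ℤ × ℤ} (h : Near v w) : Near w v := by
  unfold Near at *
  rwa [abs_sub_comm w.1, abs_sub_comm w.2]

lemma InD.unique {t : ℤ} {v w u : ℤ × ℤ} (hv : InD t v) (hw : InD t w)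
    (h1 : Near u v) (h2 : Near u w) : v = w := by
  rw [near_iff, Prod.ext_iff] at h1 h2
  rw [Prod.ext_iff]
  unfold InD at *
  omega

lemma InD'.unique {t : ℤ} {v w u : ℤ × ℤ} (hv : InD' t v) (hw : InD' t w)
    (h1 : Near u v) (h2 : Near u w) : v = w := by
  rw [near_iff, Prod.ext_iff] at h1 h2
  rw [Prod.ext_iff]
  unfold InD' at *
  omega

lemma toD_toD' {t s : ℤ} {v : ℤ × ℤ} (hv : InD t v) : toD t (toD' s v) = v :=
  (toD_spec t _).1.unique hv (toD_spec t _).2 (toD'_spec s v).2.symm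

lemma toD'_toD {t s : ℤ} {v : ℤ × ℤ} (hv : InD' s v) : toD' s (toD t v) = v :=
  (toD'_spec s _).1.unique hv (toD'_spec s _).2 (toD_spec t v).2.symm

/-! ### Sliding along the border -/

/-- Within each block of five consecutive integers, shift the points from residue `e` up to
(but excluding) residue `f` by one step towards `f`: this empties residue `e` and fills `f`. -/
def slide (e f j : ℤ) : ℤ :=
  if e % 5 ≤ j % 5 ∧ j % 5 < f % 5 then j + 1
  else if f % 5 < j % 5 ∧ j % 5 ≤ e % 5 then j - 1
  else j

lemma slide_slide {e f j : ℤ} (hj : (j - f) % 5 ≠ 0) : slide f e (slide e f j) = j := by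
  unfold slide
  split_ifs <;> omega

lemma slide_ne {e f j : ℤ} (hj : (j - f) % 5 ≠ 0) : (slide e f j - e) % 5 ≠ 0 := by
  unfold slide
  by_cases h : (e - f) % 5 = 0 <;> split_ifs <;> omega

lemma slide_mem {e f j c : ℤ} : (0 ≤ slide e f j ∧ slide e f j < 5 * c) ↔ (0 ≤ j ∧ j < 5 * c) := by
  unfold slide
  split_ifs <;> omega

lemma slide_near (e f j : ℤ) : slide e f j = j ∨ slide e f j = j + 1 ∨ slide e f j = j - 1 := by
  unfold slide
  split_ifs <;> omega

/-- The move of the border guards that do not take part in the move between the lattices. The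
vertical sides are active when `c % 5 = 4`: the guards on the right side slide from residue `e`
towards residue `f`, those on the left side from `f` towards `e`. Likewise the horizontal sides are
active when `d % 5 = 2`, with residues `g` and `h`. -/
def border (a b c d e f g h : ℤ) (v : ℤ × ℤ) : ℤ × ℤ :=
  if v.1 = 5 * a ∧ (0 ≤ v.2 ∧ v.2 < 5 * b) ∧ c % 5 = 4 then (v.1, slide e f v.2)
  else if v.1 = -1 ∧ (0 ≤ v.2 ∧ v.2 < 5 * b) ∧ c % 5 = 4 then (v.1, slide f e v.2)
  else if v.2 = 5 * b ∧ (0 ≤ v.1 ∧ v.1 < 5 * a) ∧ d % 5 = 2 then (slide g h v.1, v.2)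
  else if v.2 = -1 ∧ (0 ≤ v.1 ∧ v.1 < 5 * a) ∧ d % 5 = 2 then (slide h g v.1, v.2)
  else v

/-- The border points on active sides in the residue classes to which `border` does not apply. -/
def Cross (a b c d e f g h : ℤ) (v : ℤ × ℤ) : Prop :=
  (v.1 = 5 * a ∧ (0 ≤ v.2 ∧ v.2 < 5 * b) ∧ c % 5 = 4 ∧ (v.2 - f) % 5 = 0) ∨
  (v.1 = -1 ∧ (0 ≤ v.2 ∧ v.2 < 5 * b) ∧ c % 5 = 4 ∧ (v.2 - e) % 5 = 0) ∨
  (v.2 = 5 * b ∧ (0 ≤ v.1 ∧ v.1 < 5 * a) ∧ d % 5 = 2 ∧ (v.1 - h) % 5 = 0) ∨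
  (v.2 = -1 ∧ (0 ≤ v.1 ∧ v.1 < 5 * a) ∧ d % 5 = 2 ∧ (v.1 - g) % 5 = 0)

set_option maxHeartbeats 1000000 in
/-- A border point of `D_t` is matched with an interior point of `D'_s` precisely when it lies on
an active side, in the one residue class modulo 5 that `border` leaves out. -/
lemma crossing_iff {a b s t : ℤ} {v : ℤ × ℤ} (ha : 0 < a) (hb : 0 < b) (hv : ¬ Inner a b v) :
    (InD t v ∧ Inner a b (toD' s v)) ↔
      Cross a b (s + t) (s - t) (2 * s) (2 * s + 2) (t + 2) t v := by
  obtain ⟨x, y⟩ := v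
  unfold InD Inner toD' Cross at *
  simp only at *
  split_ifs <;> simp only <;> constructor <;> intro h <;> omega

set_option maxHeartbeats 1000000 in
/-- The counterpart of `crossing_iff` for the move from `D'_s` to `D_t`. -/
lemma crossing'_iff {a b s t : ℤ} {v : ℤ × ℤ} (ha : 0 < a) (hb : 0 < b) (hv : ¬ Inner a b v) :
    (InD' s v ∧ Inner a b (toD t v)) ↔
      Cross a b (s + t) (s - t) (2 * s + 2) (2 * s) t (t + 2) v := by
  obtain ⟨x, y⟩ := v
  unfold InD' Inner toD Cross at *
  simp only at *
  split_ifs <;> simp only <;> constructor <;> intro h <;> omega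

/-- Exchanging `e` with `f` and `g` with `h` inverts `border`. -/
lemma border_spec {a b c d e f g h : ℤ} {v : ℤ × ℤ} (ha : 0 < a) (hb : 0 < b)
    (hv : ¬ Inner a b v) (hc : ¬ Cross a b c d e f g h v) :
    ¬ Inner a b (border a b c d e f g h v) ∧
    ¬ Cross a b c d f e h g (border a b c d e f g h v) ∧
    border a b c d f e h g (border a b c d e f g h v) = v := by
  obtain ⟨x, y⟩ := v
  unfold Inner at *
  unfold Cross at hc
  simp only at hc hv
  push Not at hc
  obtain ⟨h1, h2, h3, h4⟩ := hc
  rw [border]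
  simp only
  split_ifs with c1 c2 c3 c4
  · have n := slide_ne (e := e) (h1 c1.1 c1.2.1 c1.2.2)
    have m := (slide_mem (e := e) (f := f) (c := b)).2 c1.2.1
    have i := slide_slide (e := e) (h1 c1.1 c1.2.1 c1.2.2)
    unfold border Cross
    simp only
    refine ⟨by omega, by omega, ?_⟩
    rw [if_pos ⟨c1.1, m, c1.2.2⟩, i]
  · have n := slide_ne (e := f) (h2 c2.1 c2.2.1 c2.2.2)
    have m := (slide_mem (e := f) (f := e) (c := b)).2 c2.2.1
    have i := slide_slide (e := f) (h2 c2.1 c2.2.1 c2.2.2)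
    unfold border Cross
    simp only
    refine ⟨by omega, by omega, ?_⟩
    rw [if_neg (by omega), if_pos ⟨c2.1, m, c2.2.2⟩, i]
  · have n := slide_ne (e := g) (h3 c3.1 c3.2.1 c3.2.2)
    have m := (slide_mem (e := g) (f := h) (c := a)).2 c3.2.1
    have i := slide_slide (e := g) (h3 c3.1 c3.2.1 c3.2.2)
    unfold border Cross
    simp only
    refine ⟨by omega, by omega, ?_⟩
    rw [if_neg (by omega), if_neg (by omega), if_pos ⟨c3.1, m, c3.2.2⟩, i]
  · have n := slide_ne (e := h) (h4 c4.1 c4.2.1 c4.2.2)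
    have m := (slide_mem (e := h) (f := g) (c := a)).2 c4.2.1
    have i := slide_slide (e := h) (h4 c4.1 c4.2.1 c4.2.2)
    unfold border Cross
    simp only
    refine ⟨by omega, by omega, ?_⟩
    rw [if_neg (by omega), if_neg (by omega), if_neg (by omega), if_pos ⟨c4.1, m, c4.2.2⟩, i]
  · refine ⟨hv, ?_, ?_⟩
    · unfold Cross; simp only; omega
    · unfold border; simp only; rw [if_neg c1, if_neg c2, if_neg c3, if_neg c4]

lemma border_near (a b c d e f g h : ℤ) (v : ℤ × ℤ) : Near v (border a b c d e f g h v) := by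
  obtain ⟨x, y⟩ := v
  rw [near_iff, Prod.ext_iff]
  have h1 := slide_near e f y
  have h2 := slide_near f e y
  have h3 := slide_near g h x
  have h4 := slide_near h g x
  unfold border
  split_ifs <;> simp <;> omega

/-! ### Moves between configurations on the board -/

/-- The shifted grid: the vertex `(i, j)` of `P_m □ P_n` sits at the lattice point
`(i - 1, j - 1)`, so that the interior rectangle starts at the origin. -/
def Board (m n : ℤ) (v : ℤ × ℤ) : Prop :=
  -1 ≤ v.1 ∧ v.1 < m - 1 ∧ -1 ≤ v.2 ∧ v.2 < n - 1

lemma border_board {a b c d e f g h m n : ℤ} {v : ℤ × ℤ} (hm : 5 * a + 2 ≤ m)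
    (hn : 5 * b + 2 ≤ n) (hv : Board m n v) : Board m n (border a b c d e f g h v) := by
  obtain ⟨x, y⟩ := v
  unfold border Board at *
  simp only at hv ⊢
  split_ifs with c1 c2 c3 c4 <;> simp only
  · have := (slide_mem (e := e) (f := f)).2 c1.2.1
    omega
  · have := (slide_mem (e := f) (f := e)).2 c2.2.1
    omega
  · have := (slide_mem (e := g) (f := h)).2 c3.2.1
    omega
  · have := (slide_mem (e := h) (f := g)).2 c4.2.1
    omega
  · exact hv

lemma board_of_near {a b m n : ℤ} {v w : ℤ × ℤ} (hm : 5 * a + 2 ≤ m)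
    (hn : 5 * b + 2 ≤ n) (hv : Inner a b v) (h : Near v w) : Board m n w := by
  rw [near_iff, Prod.ext_iff] at h
  unfold Inner Board at *
  omega

/-- A configuration based on the set `P`: the points of `P`, and everything outside the interior. -/
def Config (P : ℤ × ℤ → Prop) (a b : ℤ) (v : ℤ × ℤ) : Prop := P v ∨ ¬ Inner a b v

open Classical in
/-- The move between two configurations based on `P` and `Q`: points of `P` follow the matching `μ`
if they are, or become, interior, and all other points follow `β`. -/
noncomputable def move (P : ℤ × ℤ → Prop) (μ β : ℤ × ℤ → ℤ × ℤ) (a b : ℤ) (v : ℤ × ℤ) : ℤ × ℤ :=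
  if P v ∧ (Inner a b v ∨ Inner a b (μ v)) then μ v else β v

/-- `move` sends configurations to configurations and is inverted by the reverse move, provided
this holds for the matching and for the border part separately. -/
lemma move_spec {P Q : ℤ × ℤ → Prop} {μ ν β β' : ℤ × ℤ → ℤ × ℤ} {a b m n : ℤ}
    (hm : 5 * a + 2 ≤ m) (hn : 5 * b + 2 ≤ n)
    (hμ : ∀ v, Q (μ v) ∧ Near v (μ v)) (hν : ∀ v, P v → ν (μ v) = v)
    (hβ : ∀ v, ¬ Inner a b v → ¬ (P v ∧ Inner a b (μ v)) →
      ¬ Inner a b (β v) ∧ ¬ (Q (β v) ∧ Inner a b (ν (β v))) ∧ β' (β v) = v)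
    (hβn : ∀ v, Near v (β v)) (hβb : ∀ v, Board m n v → Board m n (β v))
    {v : ℤ × ℤ} (hv : Board m n v) (hc : Config P a b v) :
    Board m n (move P μ β a b v) ∧ Config Q a b (move P μ β a b v) ∧
    Near v (move P μ β a b v) ∧ move Q ν β' a b (move P μ β a b v) = v := by
  unfold move Config at *
  by_cases h : P v ∧ (Inner a b v ∨ Inner a b (μ v))
  · rw [if_pos h]
    refine ⟨?_, Or.inl (hμ v).1, (hμ v).2, ?_⟩
    · rcases h.2 with h2 | h2
      · exact board_of_near hm hn h2 (hμ v).2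
      · unfold Inner at h2
        unfold Board
        omega
    · rw [if_pos ⟨(hμ v).1, by rw [hν v h.1]; exact h.2.symm⟩, hν v h.1]
  · rw [if_neg h]
    have h1 : ¬ Inner a b v := by tauto
    obtain ⟨h2, h3, h4⟩ := hβ v h1 (by tauto)
    refine ⟨hβb v hv, Or.inr h2, hβn v, ?_⟩
    rw [if_neg (by tauto), h4]

/-! ### Transfer to the grid graph -/

/-- The lattice point at which a vertex of the grid sits. -/
def emb (m n : ℕ) (v : Fin m × Fin n) : ℤ × ℤ := ((v.1 : ℤ) - 1, (v.2 : ℤ) - 1)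

lemma emb_inj {m n : ℕ} : Function.Injective (emb m n) := by
  rintro ⟨x, y⟩ ⟨z, w⟩ h
  simp only [emb, Prod.mk.injEq] at h
  ext <;> simp only <;> omega

lemma board_emb {m n : ℕ} (v : Fin m × Fin n) : Board m n (emb m n v) := by
  have h1 := v.1.2
  have h2 := v.2.2
  unfold Board emb
  simp only
  omega

lemma exists_emb {m n : ℕ} {z : ℤ × ℤ} (h : Board m n z) : ∃ v, emb m n v = z := by
  unfold Board at h
  refine ⟨(⟨(z.1 + 1).toNat, by omega⟩, ⟨(z.2 + 1).toNat, by omega⟩), ?_⟩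
  ext <;> simp [emb] <;> omega

lemma near_emb {m n : ℕ} {v u : Fin m × Fin n} (h : Near (emb m n v) (emb m n u)) :
    u = v ∨ GridAdj m n v u := by
  unfold Near emb at h
  unfold GridAdj
  simp only [sub_sub_sub_cancel_right] at h
  rcases (le_iff_lt_or_eq.1 h) with h | h
  · left
    have h0 := abs_nonneg ((v.1 : ℤ) - (u.1 : ℤ))
    have h1 := abs_nonneg ((v.2 : ℤ) - (u.2 : ℤ))
    have h2 : (v.1 : ℤ) - (u.1 : ℤ) = 0 := abs_eq_zero.1 (by omega)
    have h3 : (v.2 : ℤ) - (u.2 : ℤ) = 0 := abs_eq_zero.1 (by omega)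
    ext <;> omega
  · exact Or.inr h

lemma near_of {m n : ℕ} {v u : Fin m × Fin n} (h : u = v ∨ GridAdj m n v u) :
    Near (emb m n v) (emb m n u) := by
  unfold Near emb
  simp only [sub_sub_sub_cancel_right]
  rcases h with rfl | h
  · simp
  · exact le_of_eq h

/-- A move of lattice points that has an inverse on the board gives a move of guards. -/
lemma transfer {m n : ℕ} {A B : ℤ × ℤ → Prop} {f f' : ℤ × ℤ → ℤ × ℤ}
    (hf : ∀ v, Board m n v → A v →
      Board m n (f v) ∧ B (f v) ∧ Near v (f v) ∧ f' (f v) = v)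
    (hf' : ∀ v, Board m n v → B v →
      Board m n (f' v) ∧ A (f' v) ∧ Near v (f' v) ∧ f (f' v) = v) :
    ∃ σ : Fin m × Fin n → Fin m × Fin n,
      Set.BijOn σ {v | A (emb m n v)} {v | B (emb m n v)} ∧
      ∀ v ∈ {v | A (emb m n v)}, σ v = v ∨ GridAdj m n v (σ v) := by
  have h : ∀ v : Fin m × Fin n, ∃ u, A (emb m n v) → emb m n u = f (emb m n v) := by
    intro v
    by_cases hA : A (emb m n v)
    · obtain ⟨u, hu⟩ := exists_emb (hf _ (board_emb v) hA).1
      exact ⟨u, fun _ => hu⟩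
    · exact ⟨v, fun h => absurd h hA⟩
  choose σ hσ using h
  refine ⟨σ, ⟨?_, ?_, ?_⟩, ?_⟩
  · intro v hv
    simp only [Set.mem_ofPred_eq] at *
    rw [hσ v hv]
    exact (hf _ (board_emb v) hv).2.1
  · intro v hv w hw hvw
    simp only [Set.mem_ofPred_eq] at *
    apply emb_inj
    rw [← (hf _ (board_emb v) hv).2.2.2, ← (hf _ (board_emb w) hw).2.2.2, ← hσ v hv, ← hσ w hw, hvw]
  · intro u hu
    simp only [Set.mem_ofPred_eq] at hu
    obtain ⟨h1, h2, -, h4⟩ := hf' _ (board_emb u) hu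
    obtain ⟨v, hv⟩ := exists_emb h1
    rw [← hv] at h2 h4
    exact ⟨v, h2, emb_inj (by rw [hσ v h2, h4])⟩
  · intro v hv
    apply near_emb
    rw [hσ v hv]
    exact (hf _ (board_emb v) hv).2.2.1

lemma config_dominating {m n : ℕ} {P : ℤ × ℤ → Prop} {a b : ℤ} {ν : ℤ × ℤ → ℤ × ℤ}
    (hm : 5 * a + 2 ≤ m) (hn : 5 * b + 2 ≤ n) (hν : ∀ v, P (ν v) ∧ Near v (ν v)) :
    GridDominating m n {v | Config P a b (emb m n v)} := by
  intro v
  by_cases h : Inner a b (emb m n v)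
  · obtain ⟨u, hu⟩ := exists_emb (board_of_near hm hn h (hν _).2)
    refine ⟨u, Or.inl (hu ▸ (hν _).1), near_emb (hu ▸ (hν _).2)⟩
  · exact ⟨v, Or.inr h, Or.inl rfl⟩

/-! ### Counting -/

/-- The closed neighborhoods of the points of a perfect code are disjoint, and every dominating set
meets each of them; hence a perfect code has at most `γ(m, n)` points on the board. -/
lemma code_card_le {m n : ℕ} {P : ℤ × ℤ → Prop}
    (hP : ∀ u v w, P v → P w → Near u v → Near u w → v = w) :
    {v : Fin m × Fin n | P (emb m n v)}.ncard ≤ gridGamma m n := by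
  have hne : {k : ℕ | ∃ D : Set (Fin m × Fin n), GridDominating m n D ∧ D.ncard = k}.Nonempty :=
    ⟨_, Set.univ, fun v => ⟨v, trivial, Or.inl rfl⟩, rfl⟩
  obtain ⟨D, hD, hk⟩ := Nat.sInf_mem hne
  choose φ hφ using hD
  rw [gridGamma, ← hk]
  refine Set.ncard_le_ncard_of_injOn φ (fun v _ => (hφ v).1) ?_ (Set.toFinite _)
  intro v hv w hw h
  exact emb_inj (hP (emb m n (φ v)) _ _ hv hw (near_of (hφ v).2).symm
    (h ▸ (near_of (hφ w).2).symm))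

/-- At most six coordinates of a side of length `m` lie outside the interior. -/
lemma side_card (m : ℕ) :
    {i : Fin m | ¬ (0 ≤ (i : ℤ) - 1 ∧ (i : ℤ) - 1 < 5 * (((m - 2) / 5 : ℕ) : ℤ))}.ncard ≤ 6 := by
  rw [← Set.ncard_coe_finset (Finset.range 6) |>.trans (Finset.card_range 6)]
  refine Set.ncard_le_ncard_of_injOn (fun i => if (i : ℕ) = 0 then 5 else m - 1 - i) ?_ ?_
    (Set.toFinite _)
  · intro i hi
    have := i.2
    simp only [Set.mem_ofPred_eq, Finset.coe_range, Set.mem_Iio] at *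
    split_ifs <;> omega
  · intro i hi j hj h
    have := i.2
    have := j.2
    simp only [Set.mem_ofPred_eq] at *
    ext
    split_ifs at h <;> omega

lemma config_card_le {m n : ℕ} {P : ℤ × ℤ → Prop}
    (hP : ∀ u v w, P v → P w → Near u v → Near u w → v = w) :
    {v : Fin m × Fin n | Config P ((m - 2) / 5 : ℕ) ((n - 2) / 5 : ℕ) (emb m n v)}.ncard ≤
      gridGamma m n + 6 * (m + n) := by
  set X := {i : Fin m | ¬ (0 ≤ (i : ℤ) - 1 ∧ (i : ℤ) - 1 < 5 * (((m - 2) / 5 : ℕ) : ℤ))} with hX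
  set Y := {i : Fin n | ¬ (0 ≤ (i : ℤ) - 1 ∧ (i : ℤ) - 1 < 5 * (((n - 2) / 5 : ℕ) : ℤ))} with hY
  have hsub : {v : Fin m × Fin n | Config P ((m - 2) / 5 : ℕ) ((n - 2) / 5 : ℕ) (emb m n v)} ⊆
      {v : Fin m × Fin n | P (emb m n v)} ∪ (X ×ˢ Set.univ ∪ Set.univ ×ˢ Y) := by
    rintro v (hv | hv)
    · exact Or.inl hv
    · right
      simp only [Inner, emb] at hv
      simp only [hX, hY, Set.mem_union, Set.mem_prod, Set.mem_ofPred_eq, Set.mem_univ]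
      tauto
  have h1 : (X ×ˢ (Set.univ : Set (Fin n))).ncard ≤ 6 * n := by
    rw [Set.ncard_prod, Set.ncard_univ, Nat.card_fin]
    exact Nat.mul_le_mul_right _ (side_card m)
  have h2 : ((Set.univ : Set (Fin m)) ×ˢ Y).ncard ≤ m * 6 := by
    rw [Set.ncard_prod, Set.ncard_univ, Nat.card_fin]
    exact Nat.mul_le_mul_left _ (side_card n)
  have h3 := Set.ncard_le_ncard hsub (Set.toFinite _)
  have h4 := Set.ncard_union_le {v : Fin m × Fin n | P (emb m n v)}
    (X ×ˢ Set.univ ∪ Set.univ ×ˢ Y)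
  have h5 := Set.ncard_union_le (X ×ˢ (Set.univ : Set (Fin n))) ((Set.univ : Set (Fin m)) ×ˢ Y)
  have h6 := code_card_le (m := m) (n := n) hP
  omega

/-- For all `s` and `t`, the configurations based on `D_t` and on `D'_s` are one move apart. -/
lemma exists_move {m n : ℕ} {a b : ℤ} (ha : 0 < a) (hb : 0 < b) (hm : 5 * a + 2 ≤ m)
    (hn : 5 * b + 2 ≤ n) (s t : ℤ) :
    (∃ σ : Fin m × Fin n → Fin m × Fin n,
      Set.BijOn σ {v | Config (InD t) a b (emb m n v)} {v | Config (InD' s) a b (emb m n v)} ∧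
      ∀ v ∈ {v | Config (InD t) a b (emb m n v)}, σ v = v ∨ GridAdj m n v (σ v)) ∧
    (∃ σ : Fin m × Fin n → Fin m × Fin n,
      Set.BijOn σ {v | Config (InD' s) a b (emb m n v)} {v | Config (InD t) a b (emb m n v)} ∧
      ∀ v ∈ {v | Config (InD' s) a b (emb m n v)}, σ v = v ∨ GridAdj m n v (σ v)) := by
  have fwd : ∀ v, Board m n v → Config (InD t) a b v → _ := fun v => move_spec
    (P := InD t) (Q := InD' s) (μ := toD' s) (ν := toD t)
    (β := border a b (s + t) (s - t) (2 * s) (2 * s + 2) (t + 2) t)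
    (β' := border a b (s + t) (s - t) (2 * s + 2) (2 * s) t (t + 2)) hm hn (toD'_spec s)
    (fun _ => toD_toD')
    (fun v h1 h2 => by
      rw [crossing_iff ha hb h1] at h2
      have h3 := border_spec ha hb h1 h2
      rw [crossing'_iff ha hb h3.1]
      exact h3)
    (border_near _ _ _ _ _ _ _ _) (fun v => border_board hm hn) (v := v)
  have bwd : ∀ v, Board m n v → Config (InD' s) a b v → _ := fun v => move_spec
    (P := InD' s) (Q := InD t) (μ := toD t) (ν := toD' s)
    (β := border a b (s + t) (s - t) (2 * s + 2) (2 * s) t (t + 2))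
    (β' := border a b (s + t) (s - t) (2 * s) (2 * s + 2) (t + 2) t) hm hn (toD_spec t)
    (fun _ => toD'_toD)
    (fun v h1 h2 => by
      rw [crossing'_iff ha hb h1] at h2
      have h3 := border_spec ha hb h1 h2
      rw [crossing_iff ha hb h3.1]
      exact h3)
    (border_near _ _ _ _ _ _ _ _) (fun v => border_board hm hn) (v := v)
  exact ⟨transfer fwd bwd, transfer bwd fwd⟩

end EternalGrid

open EternalGrid in
/-- Main theorem: there is a constant `C` such that for all `m, n ≥ 16` the grid
`P_m □ P_n` admits an eternal dominating family all of whose members have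
cardinality at most `γ(m, n) + C(m+n)`; consequently
`γ^∞(P_m □ P_n) ≤ γ(m, n) + O(m+n)`. -/
theorem eternal_domination_main :
    ∃ C : ℕ, ∀ m n : ℕ, 16 ≤ m → 16 ≤ n →
      ∃ 𝒮 : Set (Set (Fin m × Fin n)),
        EternalDominatingFamily m n 𝒮 ∧
        ∀ S ∈ 𝒮, S.ncard ≤ gridGamma m n + C * (m + n) := by
  refine ⟨6, fun m n hm hn => ?_⟩
  obtain ⟨a, ha⟩ : ∃ a : ℤ, a = ((m - 2) / 5 : ℕ) := ⟨_, rfl⟩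
  obtain ⟨b, hb⟩ : ∃ b : ℤ, b = ((n - 2) / 5 : ℕ) := ⟨_, rfl⟩
  have ha0 : 0 < a := by omega
  have hb0 : 0 < b := by omega
  have ham : 5 * a + 2 ≤ m := by omega
  have hbn : 5 * b + 2 ≤ n := by omega
  refine ⟨{S | (∃ t, S = {v | Config (InD t) a b (emb m n v)}) ∨
    ∃ s, S = {v | Config (InD' s) a b (emb m n v)}}, ⟨⟨_, Or.inl ⟨0, rfl⟩⟩, ?_, ?_⟩, ?_⟩
  · rintro S (⟨t, rfl⟩ | ⟨s, rfl⟩)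
    · exact config_dominating ham hbn (toD_spec t)
    · exact config_dominating ham hbn (toD'_spec s)
  · rintro S (⟨t, rfl⟩ | ⟨s, rfl⟩) u -
    · refine ⟨_, Or.inr ⟨(emb m n u).1 - 2 * (emb m n u).2, rfl⟩, Or.inl ?_,
        (exists_move ha0 hb0 ham hbn _ t).1⟩
      simp [InD']
    · refine ⟨_, Or.inl ⟨(emb m n u).1 + 2 * (emb m n u).2, rfl⟩, Or.inl ?_,
        (exists_move ha0 hb0 ham hbn s _).2⟩
      simp [InD]
  · rintro S (⟨t, rfl⟩ | ⟨s, rfl⟩) <;> subst ha hb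
    · exact config_card_le fun u v w => InD.unique
    · exact config_card_le fun u v w => InD'.unique
end
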